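/- For all β(0,1)-trees S and T with open(S) = 1 and T nontrivial, and every integer i with 1 ≤ i ≤ root(T), open(ν_i(S,T)) = 1 + open(T). -/

import Mathlib

/-!
Count the open nodes along the rightmost path. When `j = i - 1` is added to every label of the
rightmost path of `S`, an interior node of that path and its rightmost child gain the same amount,
so each interior node keeps its status (moderate or excessive), and hence each node of `S` whose
rightmost child is not the rightmost leaf `x` stays open or stays closed. Two nodes need care.

* The leaf `x`, open in `S`, becomes a copy of the root of `T` with another label. Openness of a
  node depends only on its children, so the path from `x` down contributes exactly `open(T)`.
* The parent of `x` was closed, since `x` was a leaf. Now `x` has children and its label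
  `i - 1 ≤ root(T) - 1` is at most the sum of their labels, so `x` is moderate and its parent is
  open.

The loss of `x` and the gain of its parent cancel, which gives `open(S) + open(T)` in total for
every nontrivial `S` (`openCount_nuT`), and `open(S) = 1` yields the result.
-/

/-- Labeled rooted plane trees: each node carries a natural-number label and an
ordered list of subtrees. -/
inductive BTree : Type
  | node : ℕ → List BTree → BTree
deriving Repr

namespace BTree

/-- The trivial β(0,1)-tree ε: a single node labeled 0. -/
def eps : BTree := node 0 []

/-- The label of the root of a tree. -/
def label : BTree → ℕ
  | node n _ => n

/-- The list of subtrees of the root. -/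
def children : BTree → List BTree
  | node _ ts => ts

/-- The sum of the labels of the children of the root. -/
def childSum (t : BTree) : ℕ := (t.children.map label).sum

/-- Validity condition for non-root nodes of a β(0,1)-tree: leaves have label 0,
and the label of every node exceeds the sum of its children's labels by at most one. -/
inductive ValidSub : BTree → Prop
  | mk (n : ℕ) (ts : List BTree) :
      (ts = [] → n = 0) →
      n ≤ (ts.map label).sum + 1 →
      (∀ t ∈ ts, ValidSub t) →
      ValidSub (node n ts)

/-- `t` is a β(0,1)-tree: the trivial tree is the single node labeled 0; otherwise the
root label is one more than the sum of its children's labels, and every non-root node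
has label at most one more than the sum of its children's labels, leaves having label 0. -/
def IsBeta (t : BTree) : Prop :=
  (t.children = [] → t.label = 0) ∧
  (t.children ≠ [] → t.label = childSum t + 1) ∧
  ∀ c ∈ t.children, ValidSub c

mutual
/-- The rightmost path of a tree, from the root to the rightmost leaf; each node on
the path is recorded together with its full subtree. -/
def rpath : BTree → List BTree
  | node n ts => node n ts :: rpathL ts
def rpathL : List BTree → List BTree
  | [] => []
  | [t] => rpath t
  | _ :: t :: ts => rpathL (t :: ts)
end

/-- A node is moderate if its label does not exceed the sum of its children's labels. -/
def moderate (t : BTree) : Bool := decide (t.label ≤ childSum t)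

/-- A node (on the rightmost path) is open iff it is a leaf (i.e. it is the rightmost
leaf), or its rightmost child is a non-leaf moderate node. -/
def isOpenNode (t : BTree) : Bool :=
  match t.children.getLast? with
  | none => true
  | some c => !c.children.isEmpty && moderate c

/-- The statistic `root`: the label of the root. -/
def rootStat (t : BTree) : ℕ := t.label

/-- The statistic `open`: the number of open nodes (all of which lie on the
rightmost path), with open(ε) = 0. -/
def openStat : BTree → ℕ
  | node 0 [] => 0
  | t => (rpath t).countP isOpenNode

/-- The statistic `rmod`: the number of moderate nodes on the rightmost path,
with rmod(ε) = 0. -/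
def rmodStat : BTree → ℕ
  | node 0 [] => 0
  | t => (rpath t).countP moderate

mutual
/-- The number of nodes of a tree. -/
def size : BTree → ℕ
  | node _ ts => 1 + sizeL ts
def sizeL : List BTree → ℕ
  | [] => 0
  | t :: ts => size t + sizeL ts
end

mutual
/-- The number of excessive nodes of a tree (nodes whose label exceeds the sum of the
labels of their children). -/
def excT : BTree → ℕ
  | node n ts => (if (ts.map label).sum < n then 1 else 0) + excL ts
def excL : List BTree → ℕ
  | [] => 0
  | t :: ts => excT t + excL ts
end

/-- The sum U ⊕ V of two trees: identify the two roots into a new root labeled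
root(U) + root(V) − 1, its children being those of U followed by those of V. -/
def oplus (u v : BTree) : BTree := node (u.label + v.label - 1) (u.children ++ v.children)

/-- Relabel the root. -/
def setLabel (i : ℕ) (t : BTree) : BTree := node i t.children

/-- λ_i(T): join a new root, labeled i+1, by an edge to the old root, which is relabeled i. -/
def lam (i : ℕ) (t : BTree) : BTree := node (i + 1) [setLabel i t]

/-- Iterated ⊕ of a list of trees (ε for the empty list). -/
def oplusList : List BTree → BTree
  | [] => eps
  | [t] => t
  | t :: ts => oplus t (oplusList ts)

/-- ρ(T₁,…,T_k) = λ₀(T₁) ⊕ ⋯ ⊕ λ₀(T_k). -/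
def rho (Ts : List BTree) : BTree := oplusList (Ts.map (lam 0))

/-- Add one to the label of the root. -/
def incRoot (t : BTree) : BTree := node (t.label + 1) t.children

mutual
/-- Walk down the rightmost path of a tree looking for the i-th open node x, adding one
to each label on the way (through x, and through the rightmost child y of x if x is not
a leaf); at x, append the children of S. -/
def muT (S : BTree) : ℕ → BTree → BTree
  | i, node n ts =>
    if isOpenNode (node n ts) && decide (i ≤ 1) then
      if ts.isEmpty then node (n + 1) S.children
      else node (n + 1) (ts.dropLast ++ [incRoot (ts.getLastD eps)] ++ S.children)
    else
      node (n + 1) (muL S (if isOpenNode (node n ts) then i - 1 else i) ts)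
def muL (S : BTree) (i : ℕ) : List BTree → List BTree
  | [] => []
  | [t] => [muT S i t]
  | t :: ts => t :: muL S i ts
end

/-- μ_i(S,T): identify the i-th open node x on the rightmost path of T with the root of
S, keeping the label of x, and add one to each node on the rightmost path of T between
the root and y (inclusive), where y = x if x is a leaf and otherwise y is the rightmost
child of x.  (In particular μ₁(S,ε) = S when root(S) = 1.) -/
def mu (i : ℕ) (S T : BTree) : BTree := muT S i T

mutual
/-- Walk down the rightmost path of a tree adding j to every label; at the rightmost
leaf, attach the children of T. -/
def nuT (T : BTree) (j : ℕ) : BTree → BTree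
  | node n [] => node (n + j) T.children
  | node n ts => node (n + j) (nuL T j ts)
def nuL (T : BTree) (j : ℕ) : List BTree → List BTree
  | [] => []
  | [t] => [nuT T j t]
  | t :: ts => t :: nuL T j ts
end

/-- ν_i(S,T): identify the rightmost leaf x of S with the root of T, keeping the zero
label of x, and add i − 1 to each node on the rightmost path of S between the root and
x (inclusive).  (In particular ν₁(S,ε) = S.) -/
def nu (i : ℕ) (S T : BTree) : BTree := nuT T (i - 1) S

/-- σ(T₁,…,T_k) = μ₁(ρ(T_{k−1},…,T₁,ε), T_k). -/
def sigma (Ts : List BTree) : BTree :=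
  mu 1 (rho (Ts.dropLast.reverse ++ [eps])) (Ts.getLastD eps)

/-- The maximal suffix of a list of trees all of whose root labels are 0. -/
def zeroSuffix : List BTree → List BTree
  | [] => []
  | t :: ts =>
    let z := zeroSuffix ts
    if z.length = ts.length ∧ t.label = 0 then t :: z else z

/-- Subtract one from the label of the root. -/
def decRoot (t : BTree) : BTree := node (t.label - 1) t.children

mutual
/-- Inverse of μ on β(0,1)-trees with root label > 1: walk down the rightmost path to
the parent x of the first node labeled 0 on the path (subtracting one from the labels
on the way); the maximal zero-labeled suffix of the children of x is the list of
children of S, the rest (with the label of its last element decremented) are the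
children of x in T.  Returns the pair (T, S) such that the input is μ_i(S,T). -/
def decT : BTree → BTree × BTree
  | node n ts =>
    if (ts.getLastD eps).label = 0 then
      let zs := zeroSuffix ts
      let ps := ts.take (ts.length - zs.length)
      (node (n - 1) (if ps.isEmpty then [] else ps.dropLast ++ [decRoot (ps.getLastD eps)]),
       node 1 zs)
    else
      (node (n - 1) (decL ts).1, (decL ts).2)
def decL : List BTree → List BTree × BTree
  | [] => ([], eps)
  | [t] => ([(decT t).1], (decT t).2)
  | t :: ts => (t :: (decL ts).1, (decL ts).2)
end

/-- Restore the root label of a β(0,1)-tree whose root label was forgotten: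
ε for a single node, and otherwise one plus the sum of the children's labels. -/
def makeRoot : BTree → BTree
  | node _ [] => eps
  | node _ ts => node ((ts.map label).sum + 1) ts

/-- Fueled version of the map g.  A β(0,1)-tree with root label 1 is ρ(T₁,…,T_k) where
the Tⱼ are recovered from the children via `makeRoot`, and g maps it to
σ(g(T₁),…,g(T_k)); a β(0,1)-tree U with root label > 1 is μ_i(S,T) where (T,S) = decT U
and i = open(U) + 1 − open(S) (since open(μ_i(S,T)) = i − 1 + open(S)), and g maps it
to ν_i(g(S),g(T)); finally g(ε) = ε. -/
def gF : ℕ → BTree → BTree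
  | 0, t => t
  | fuel + 1, t =>
    match t with
    | node 0 _ => t
    | node 1 cs => sigma (cs.map fun c => gF fuel (makeRoot c))
    | node _ _ =>
      nu (openStat t + 1 - openStat (decT t).2) (gF fuel (decT t).2) (gF fuel (decT t).1)

/-- The map g on β(0,1)-trees: g(ε) = ε, g(ρ(T₁,…,T_k)) = σ(g(T₁),…,g(T_k)), and
g(μ_i(S,T)) = ν_i(g(S), g(T)).  (The number of nodes suffices as fuel since all
recursive calls are on trees with strictly fewer nodes.) -/
def g (t : BTree) : BTree := gF (size t) t

/-- The number of open nodes on the rightmost path, without the convention `open(ε) = 0`: a single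
node counts as one open node. -/
def openCount (t : BTree) : ℕ := (rpath t).countP isOpenNode

/-- Induction along the rightmost path, from the rightmost leaf up to the root. -/
theorem right_induction {P : BTree → Prop} (leaf : ∀ n, P (node n []))
    (step : ∀ n ts c, P c → P (node n (ts ++ [c]))) : ∀ t, P t
  | node n ts => by
    rcases List.eq_nil_or_concat ts with h | ⟨l, c, h⟩
    · subst h
      exact leaf n
    · rw [List.concat_eq_append] at h
      have hlt : sizeOf c < sizeOf ts :=
        List.sizeOf_lt_of_mem (by rw [h]; simp)
      rw [h]
      exact step n l c (right_induction leaf step c)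
  termination_by t => sizeOf t
  decreasing_by
    simp only [BTree.node.sizeOf_spec]
    omega

theorem rpathL_append (ts : List BTree) (c : BTree) : rpathL (ts ++ [c]) = rpath c := by
  induction ts with
  | nil => simp [rpathL]
  | cons a l ih => cases l <;> simp_all [rpathL]

theorem nuL_append (T : BTree) (j : ℕ) (ts : List BTree) (c : BTree) :
    nuL T j (ts ++ [c]) = ts ++ [nuT T j c] := by
  induction ts with
  | nil => simp [nuL]
  | cons a l ih => cases l <;> simp_all [nuL]

theorem nuT_append (T : BTree) (j n : ℕ) (ts : List BTree) (c : BTree) :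
    nuT T j (node n (ts ++ [c])) = node (n + j) (ts ++ [nuT T j c]) := by
  rw [← nuL_append]
  cases h : ts ++ [c] with
  | nil => simp at h
  | cons a l => simp [nuT]

theorem label_nuT (T : BTree) (j : ℕ) (s : BTree) : (nuT T j s).label = s.label + j := by
  obtain ⟨n, ts⟩ := s
  cases ts <;> simp [nuT, label]

/-- Openness depends only on the children, so the root label is irrelevant to the count. -/
theorem openCount_root_irrel (m n : ℕ) (ts : List BTree) :
    openCount (node m ts) = openCount (node n ts) := by
  simp only [openCount, rpath, List.countP_cons]
  rfl

theorem openCount_append (n : ℕ) (ts : List BTree) (c : BTree) :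
    openCount (node n (ts ++ [c])) =
      openCount c + if (!c.children.isEmpty && moderate c) then 1 else 0 := by
  simp [openCount, rpath, rpathL_append, List.countP_cons, isOpenNode, children]

/-- The left-hand correction accounts for a single node `s`, which is replaced by `T` and so loses
its own contribution of one. -/
theorem openCount_nuT (T : BTree) (j : ℕ) (hT : T.children ≠ []) (hj : j ≤ childSum T)
    (s : BTree) : ValidSub s →
      openCount (nuT T j s) + (if s.children.isEmpty then 1 else 0) =
        openCount s + openCount T := by
  induction s using right_induction with
  | leaf n =>
    intro _
    obtain ⟨m, us⟩ := T
    have h1 : openCount (node n []) = 1 := by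
      simp [openCount, rpath, rpathL, isOpenNode, children]
    simp only [nuT, h1]
    rw [openCount_root_irrel _ m]
    simp [children, add_comm]
  | step n ts c ih =>
    rintro ⟨_, _, -, -, hv⟩
    have hc : ValidSub c := hv c (by simp)
    specialize ih hc
    rw [nuT_append, openCount_append, openCount_append]
    rcases c with ⟨m, us⟩
    rcases List.eq_nil_or_concat us with rfl | ⟨l, d, rfl⟩
    -- `c` is the rightmost leaf: its parent was closed and becomes open.
    · obtain ⟨_, _, h0, -, -⟩ := hc
      have hm : m = 0 := h0 rfl
      subst hm
      have hmod : moderate (node (0 + j) T.children) = true := by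
        simpa [moderate, childSum, label, children] using hj
      have hne : T.children.isEmpty = false := by simpa using hT
      simp only [nuT, hmod] at ih ⊢
      simp [children] at ih hne ⊢
      simp [hne]
      exact ih
    -- `c` and its own rightmost child both gain `j`, so `c` stays moderate or excessive.
    · have hmod : moderate (nuT T j (node m (l ++ [d]))) = moderate (node m (l ++ [d])) := by
        simp only [nuT_append, moderate, childSum, children, label]
        simp [label_nuT, ← add_assoc]
      simp only [List.concat_eq_append] at ih ⊢
      rw [hmod]
      rw [nuT_append] at ih ⊢
      simp [children] at ih ⊢
      omega

theorem IsBeta.validSub {t : BTree} (h : IsBeta t) : ValidSub t := by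
  obtain ⟨n, ts⟩ := t
  obtain ⟨h0, h1, h2⟩ := h
  refine ⟨n, ts, h0, ?_, h2⟩
  by_cases hts : ts = []
  · have : n = 0 := h0 hts
    omega
  · exact (h1 hts).le

theorem IsBeta.children_ne_nil {t : BTree} (h : IsBeta t) (ht : t ≠ eps) : t.children ≠ [] := by
  obtain ⟨n, ts⟩ := t
  intro hts
  have h0 : n = 0 := h.1 hts
  have h1 : ts = [] := hts
  exact ht (by rw [h0, h1, eps])

theorem openStat_eq_openCount {t : BTree} (h : t.children ≠ []) : openStat t = openCount t := by
  obtain ⟨n, ts⟩ := t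
  cases ts with
  | nil => exact absurd rfl h
  | cons a l => simp [openStat, openCount]

/-- For all β(0,1)-trees S and T with open(S) = 1 and T nontrivial, and every integer i
with 1 ≤ i ≤ root(T), open(ν_i(S,T)) = 1 + open(T). -/
theorem open_nu (S T : BTree) (i : ℕ) (hS : IsBeta S) (hT : IsBeta T)
    (hoS : openStat S = 1) (hTnt : T ≠ eps) (hi1 : 1 ≤ i) (hi2 : i ≤ rootStat T) :
    openStat (nu i S T) = 1 + openStat T := by
  have hTc := hT.children_ne_nil hTnt
  have hSc : S.children ≠ [] := hS.children_ne_nil (by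
    rintro rfl
    simp [openStat, eps] at hoS)
  have hroot : T.label = childSum T + 1 := hT.2.1 hTc
  have hj : i - 1 ≤ childSum T := by
    unfold rootStat at hi2
    omega
  have key := openCount_nuT T (i - 1) hTc hj S hS.validSub
  have hNc : (nu i S T).children ≠ [] := by
    obtain ⟨n, ts⟩ := S
    rcases List.eq_nil_or_concat ts with rfl | ⟨l, d, rfl⟩
    · exact absurd rfl hSc
    · rw [List.concat_eq_append, nu, nuT_append]
      simp [children]
  rw [openStat_eq_openCount hSc] at hoS
  rw [openStat_eq_openCount hNc, openStat_eq_openCount hTc, nu]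
  simpa [hSc, hoS] using key

end BTree
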